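/- The user-centric index satisfies additivity, null artists, and equal global impact of users, but it fails equal individual impact of similar users and fails equal impact of artists. -/

import Mathlib

open Finset

/-- A popularity index assigns, to every streaming problem `(N, M, t)`
(artists `N`, users `M`, stream matrix `t`), a real value for each artist. -/
abbrev SIndex : Type := Finset ℕ → Finset ℕ → (ℕ → ℕ → ℕ) → ℕ → ℝ

/-- `(N, M, t)` is a streaming problem: `N` (artists) and `M` (users) are nonempty
finite sets and every user has streamed some content. -/
def IsProblem (N M : Finset ℕ) (t : ℕ → ℕ → ℕ) : Prop :=
  N.Nonempty ∧ M.Nonempty ∧ ∀ j ∈ M, 0 < ∑ i ∈ N, t i j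

/-- `I` is an index: nonnegative values with positive total, on every problem. -/
def IsIndex (I : SIndex) : Prop :=
  ∀ N M t, IsProblem N M t →
    (∀ i ∈ N, 0 ≤ I N M t i) ∧ 0 < ∑ i ∈ N, I N M t i

/-- Additivity: if `M` splits into disjoint `M₁, M₂` and `t` agrees with
`t₁` on the columns of `M₁` and with `t₂` on the columns of `M₂`, then the
index is the sum of the indices of the two subproblems. -/
def AdditiveIndex (I : SIndex) : Prop :=
  ∀ N M M₁ M₂ (t t₁ t₂ : ℕ → ℕ → ℕ),
    IsProblem N M t → IsProblem N M₁ t₁ → IsProblem N M₂ t₂ →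
    M = M₁ ∪ M₂ → Disjoint M₁ M₂ →
    (∀ i ∈ N, ∀ j ∈ M₁, t i j = t₁ i j) →
    (∀ i ∈ N, ∀ j ∈ M₂, t i j = t₂ i j) →
    ∀ i ∈ N, I N M t i = I N M₁ t₁ i + I N M₂ t₂ i

/-- Null artists: an artist with no streams gets importance zero. -/
def NullArtists (I : SIndex) : Prop :=
  ∀ N M t, IsProblem N M t → ∀ i ∈ N, (∑ j ∈ M, t i j) = 0 → I N M t i = 0

/-- Pairwise homogeneity. -/
def PairwiseHomogeneous (I : SIndex) : Prop :=
  ∀ N M t, IsProblem N M t → ∀ i ∈ N, ∀ i' ∈ N, ∀ lam : ℝ, 0 ≤ lam →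
    (∀ j ∈ M, (t i j : ℝ) = lam * (t i' j : ℝ)) →
    I N M t i = lam * I N M t i'

/-- Equal individual impact of similar users (removing either of two users with
the same streams on artist `i` has the same effect on `i`'s index). -/
def EqualIndividualImpact (I : SIndex) : Prop :=
  ∀ N M t, IsProblem N M t → 2 ≤ M.card →
    ∀ i ∈ N, ∀ j ∈ M, ∀ j' ∈ M, t i j = t i j' →
      I N (M.erase j) t i = I N (M.erase j') t i

/-- Equal global impact of users. -/
def EqualGlobalImpact (I : SIndex) : Prop :=
  ∀ N M t, IsProblem N M t → 2 ≤ M.card →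
    ∀ j ∈ M, ∀ j' ∈ M,
      ∑ i ∈ N, I N (M.erase j) t i = ∑ i ∈ N, I N (M.erase j') t i

/-- Equal impact of artists (for pairs whose removal still leaves a streaming problem). -/
def EqualArtistImpact (I : SIndex) : Prop :=
  ∀ N M t, IsProblem N M t → 2 ≤ N.card →
    ∀ i ∈ N, ∀ i' ∈ N,
      IsProblem (N.erase i) M t → IsProblem (N.erase i') M t →
      I N M t i - I (N.erase i') M t i = I N M t i' - I (N.erase i) M t i'

/-- The streaming profile of user `j`, viewed as a stream vector over `N`
(zero outside `N`). -/
def prof (N : Finset ℕ) (t : ℕ → ℕ → ℕ) (j : ℕ) : ℕ → ℕ :=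
  fun i => if i ∈ N then t i j else 0

/-- `x` is a stream vector over `N`: it vanishes outside `N`. -/
def PadVec (N : Finset ℕ) (x : ℕ → ℕ) : Prop := ∀ i, i ∉ N → x i = 0

/-- A weight system: a positive weight for each user and each stream vector over each `N`. -/
def IsWeightSystem (ω : Finset ℕ → ℕ → (ℕ → ℕ) → ℝ) : Prop :=
  ∀ N (j : ℕ) x, PadVec N x → 0 < ω N j x

/-- `I` is a weighted index. -/
def IsWeightedIndex (I : SIndex) : Prop :=
  ∃ ω, IsWeightSystem ω ∧
    ∀ N M t, IsProblem N M t → ∀ i ∈ N,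
      I N M t i = ∑ j ∈ M, ω N j (prof N t j) * (t i j : ℝ)

/-- A decomposition function `d N i j x` (artist `i`, user `j`, stream vector `x` over `N`). -/
abbrev DFun : Type := Finset ℕ → ℕ → ℕ → (ℕ → ℕ) → ℝ

/-- `d` is a genuine decomposition function: nonnegative, and zero on artists with
no streams in the vector. -/
def IsDecompFn (d : DFun) : Prop :=
  (∀ N, ∀ i ∈ N, ∀ (j : ℕ) x, PadVec N x → 0 ≤ d N i j x) ∧
  (∀ N, ∀ i ∈ N, ∀ (j : ℕ) x, PadVec N x → x i = 0 → d N i j x = 0)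

/-- `d` decomposes the index `I`. -/
def Decomposes (d : DFun) (I : SIndex) : Prop :=
  ∀ N M t, IsProblem N M t → ∀ i ∈ N,
    I N M t i = ∑ j ∈ M, d N i j (prof N t j)

/-- `I` is a decomposable index. -/
def IsDecomposable (I : SIndex) : Prop :=
  IsIndex I ∧ ∃ d, IsDecompFn d ∧ Decomposes d I

/-- A decomposition function is user independent if `d N i j x` only depends on `x i`. -/
def UserIndependent (d : DFun) : Prop :=
  ∀ N, ∀ i ∈ N, ∀ (j j' : ℕ) x x', PadVec N x → PadVec N x' →
    x i = x' i → d N i j x = d N i j' x'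

/-- A decomposition function is aggregate invariant if the total importance granted
by any (nonzero) stream vector of any user is constant. -/
def AggregateInvariant (d : DFun) : Prop :=
  ∀ N (j j' : ℕ) x x', PadVec N x → PadVec N x' →
    (∃ i ∈ N, 0 < x i) → (∃ i ∈ N, 0 < x' i) →
    ∑ i ∈ N, d N i j x = ∑ i ∈ N, d N i j' x'

/-- The Shapley value of the TU game `v` with player set `N`. -/
noncomputable def shapleyValue (N : Finset ℕ) (v : Finset ℕ → ℝ) (i : ℕ) : ℝ :=
  ∑ S ∈ (N.erase i).powerset,
    ((S.card.factorial * (N.card - S.card - 1).factorial : ℕ) : ℝ) / ((N.card.factorial : ℕ) : ℝ)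
      * (v (insert i S) - v S)

/-- The artists of `N` streamed by the vector `x`. -/
def suppOn (N : Finset ℕ) (x : ℕ → ℕ) : Finset ℕ := N.filter (fun i => 0 < x i)

/-- Restriction (with zero padding) of a stream vector to `A`. -/
def padTo (A : Finset ℕ) (x : ℕ → ℕ) : ℕ → ℕ := fun i => if i ∈ A then x i else 0

/-- `d` is Shapley induced: there is a family of TU games, coherent under restriction
to streamed artists, whose Shapley values yield `d`. -/
def ShapleyInduced (d : DFun) : Prop :=
  ∃ V : Finset ℕ → ℕ → (ℕ → ℕ) → Finset ℕ → ℝ,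
    (∀ N (j : ℕ) x, V N j x ∅ = 0) ∧
    (∀ N (j : ℕ) x, PadVec N x → ∀ S ⊆ N,
      V N j x S = V (S ∩ suppOn N x) j (padTo (S ∩ suppOn N x) x) (S ∩ suppOn N x)) ∧
    (∀ N (j : ℕ) x, PadVec N x → ∀ i ∈ N, d N i j x = shapleyValue N (V N j x) i)

/-- The pro-rata index. -/
noncomputable def proRata : SIndex := fun _N M t i => ∑ j ∈ M, (t i j : ℝ)

/-- The user-centric index. -/
noncomputable def userCentric : SIndex := fun N M t i =>
  ∑ j ∈ M, (t i j : ℝ) / (∑ i' ∈ N, (t i' j : ℝ))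

/-- The Shapley index. -/
noncomputable def shapleyIndex : SIndex := fun N M t i =>
  ∑ j ∈ M, if 0 < t i j then ((N.filter fun i' => 0 < t i' j).card : ℝ)⁻¹ else 0

/-- The equal-division index. -/
noncomputable def equalDivision : SIndex := fun N M _t _i => (M.card : ℝ) / (N.card : ℝ)

theorem uc_total (N M : Finset ℕ) (t : ℕ → ℕ → ℕ) (h : ∀ j ∈ M, 0 < ∑ i ∈ N, t i j) :
    ∑ i ∈ N, userCentric N M t i = (M.card : ℝ) := by
  unfold userCentric
  rw [Finset.sum_comm]
  have : ∀ j ∈ M, ∑ i ∈ N, (t i j : ℝ) / (∑ i' ∈ N, (t i' j : ℝ)) = 1 := by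
    intro j hj
    rw [← Finset.sum_div]
    have h1 : (0 : ℝ) < ∑ i ∈ N, (t i j : ℝ) := by exact_mod_cast h j hj
    exact div_self h1.ne'
  rw [Finset.sum_congr rfl this]
  simp

/-- The user-centric index satisfies additivity, null artists, and equal
global impact of users, but it fails equal individual impact of similar users and fails
equal impact of artists. -/
theorem statement17 :
    IsIndex userCentric ∧ AdditiveIndex userCentric ∧ NullArtists userCentric ∧
    EqualGlobalImpact userCentric ∧
    ¬ EqualIndividualImpact userCentric ∧ ¬ EqualArtistImpact userCentric := by
  refine ⟨?_, ?_, ?_, ?_, ?_, ?_⟩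
  · rintro N M t ⟨_, hM, h⟩
    refine ⟨fun i _ => ?_, ?_⟩
    · unfold userCentric
      positivity
    · rw [uc_total N M t h]
      exact_mod_cast hM.card_pos
  · intro N M M₁ M₂ t t₁ t₂ _ _ _ hM hd h1 h2 i hi
    subst hM
    unfold userCentric
    rw [Finset.sum_union hd]
    congr 1
    · refine Finset.sum_congr rfl fun j hj => ?_
      rw [h1 i hi j hj, Finset.sum_congr rfl fun k hk => by rw [h1 k hk j hj]]
    · refine Finset.sum_congr rfl fun j hj => ?_
      rw [h2 i hi j hj, Finset.sum_congr rfl fun k hk => by rw [h2 k hk j hj]]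
  · intro N M t _ i _ h0
    unfold userCentric
    refine Finset.sum_eq_zero fun j hj => ?_
    rw [Finset.sum_eq_zero_iff.mp h0 j hj]
    simp
  · intro N M t h _ j hj j' hj'
    rw [uc_total N _ t fun k hk => h.2.2 k (Finset.mem_of_mem_erase hk),
      uc_total N _ t fun k hk => h.2.2 k (Finset.mem_of_mem_erase hk),
      Finset.card_erase_of_mem hj, Finset.card_erase_of_mem hj']
  · intro H
    have := H {0, 1} {0, 1} (fun i j => if i = 0 then 1 else j)
      (by unfold IsProblem; decide) (by decide) 0 (by decide) 0 (by decide) 1 (by decide) rfl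
    have e0 : ({0, 1} : Finset ℕ).erase 0 = {1} := by decide
    have e1 : ({0, 1} : Finset ℕ).erase 1 = {0} := by decide
    rw [e0, e1] at this
    norm_num [userCentric] at this
  · intro H
    have e0 : ({0, 1, 2} : Finset ℕ).erase 0 = {1, 2} := by decide
    have e1 : ({0, 1, 2} : Finset ℕ).erase 1 = {0, 2} := by decide
    have := H {0, 1, 2} {0} (fun i _ => i + 1)
      (by unfold IsProblem; decide) (by decide) 0 (by decide) 1 (by decide)
      (by unfold IsProblem; decide) (by unfold IsProblem; decide)
    rw [e0, e1] at this
    norm_num [userCentric] at this
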